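/- Let A be a nonempty proper subset of S and for j ∈ A let w_j ∈ ℝ^A denote the canonical projection of v_j onto the coordinates in A. Then for every vector v ∈ ℝ^A there exists a subset D ⊆ A and nonnegative reals (α_j)_{j∈A} such that v = Σ_{j∈D} α_j w_j + Σ_{k∈A∖D} α_k e_k. -/

import Mathlib

/-!
Let `W` be the `A × A` matrix whose rows are the `w_j`. Off the diagonal `W` is nonnegative, and
`W h` is the generator applied to the extension of `h` by zero. The claim is that the linear
complementarity problem `v = y + x W`, `x, y ≥ 0`, `x_k y_k = 0` for all `k`, is solvable; one then
takes `D = {x > 0}`, with `α = x` on `D` and `α = y` off `D`.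

* Feasibility (`exists_nonneg_le`): there is `x ≥ 0` with `x W ≤ v`. By the minimum principle
  (`nonneg_of_gen_nonpos`, where irreducibility and `A ≠ S` enter), `W h ≤ 0` forces `h ≥ 0`. So `W`
  is invertible and `-W⁻¹` has nonnegative entries; `x = -c W⁻¹` with `c = max (-v) 0` works.
* Complementarity (`exists_complementary`): among all feasible `x`, take one minimising `∑ x_k`.
  If both `x_k` and the slack `(v - x W)_k` were positive, lowering `x_k` slightly would preserve
  feasibility, since the off-diagonal entries of `W` are nonnegative, and would decrease the sum.
-/

open MeasureTheory Set
open scoped NNReal ENNReal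

noncomputable section

variable {S : Type*} [Fintype S] [DecidableEq S]

/-- The generator of the underlying Markov chain. -/
def gen (r : S → S → ℝ) (f : S → ℝ) (j : S) : ℝ := ∑ k, r j k * (f k - f j)

/-- Irreducibility of the jump rates. -/
def IrreducibleRates (r : S → S → ℝ) : Prop :=
  ∀ j k : S, j ≠ k → Relation.TransGen (fun a c => 0 < r a c) j k

/-- canonical basis vector of ℝ^S -/
def ebasis (j : S) : S → ℝ := Pi.single j 1

/-- the vectors v_j = Σ_k r(j,k)(e_k - e_j) -/
def vvec (r : S → S → ℝ) (j : S) : S → ℝ := ∑ k, r j k • (ebasis k - ebasis j)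

/-- second directional derivative (∂_d)² H (x) -/
def secondD (H : (S → ℝ) → ℝ) (d x : S → ℝ) : ℝ :=
  fderiv ℝ (fun y => fderiv ℝ H y d) x d

/-- membership in the class 𝓓_j -/
def memD (r : S → S → ℝ) (j : S) (H : (S → ℝ) → ℝ) : Prop :=
  ContDiff ℝ 2 H ∧
  ContinuousOn (fun x => if 0 < x j then fderiv ℝ H x (vvec r j) / x j else 0)
    (stdSimplex ℝ S)

/-- the operator 𝔏 -/
def Lop (r : S → S → ℝ) (m : S → ℝ) (b : ℝ) (H : (S → ℝ) → ℝ) (x : S → ℝ) : ℝ :=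
  b * ∑ j, (if x j ≠ 0 then (m j / x j) * fderiv ℝ H x (vvec r j) else 0)
    + (1 / 2) * ∑ j, ∑ k, m j * r j k * secondD H (ebasis k - ebasis j) x

/-- the path space C(ℝ₊, Σ) -/
abbrev PathSp (S : Type*) [Fintype S] := C(ℝ≥0, ↥(stdSimplex ℝ S))

instance : MeasurableSpace (PathSp S) := borel _

/-- the natural filtration 𝓕_t = σ(X_s : s ≤ t) -/
def filtr (S : Type*) [Fintype S] (t : ℝ≥0) : MeasurableSpace (PathSp S) :=
  ⨆ s ∈ Set.Iic t,
    MeasurableSpace.comap (fun ω : PathSp S => ((ω s : S → ℝ))) inferInstance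

/-- the martingale property with respect to the natural filtration -/
def IsMartingale (μ : Measure (PathSp S)) (M : ℝ≥0 → PathSp S → ℝ) : Prop :=
  (∀ t, Integrable (M t) μ) ∧
  (∀ t, @Measurable _ _ (filtr S t) _ (M t)) ∧
  (∀ s t : ℝ≥0, s ≤ t → ∀ A : Set (PathSp S), MeasurableSet[filtr S s] A →
    ∫ ω in A, M t ω ∂μ = ∫ ω in A, M s ω ∂μ)

/-- the process H(X_t) - ∫₀ᵗ (𝔏H)(X_s) ds -/
def martProc (r : S → S → ℝ) (m : S → ℝ) (b : ℝ) (H : (S → ℝ) → ℝ)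
    (t : ℝ≥0) (ω : PathSp S) : ℝ :=
  H (ω t : S → ℝ) - ∫ s in Set.Icc (0:ℝ) (t:ℝ), Lop r m b H ((ω s.toNNReal : S → ℝ))

/-- μ is a solution of the 𝔏-martingale problem -/
def SolvesMP (r : S → S → ℝ) (m : S → ℝ) (b : ℝ) (μ : Measure (PathSp S)) : Prop :=
  ∀ H : (S → ℝ) → ℝ, (∀ j : S, memD r j H) → IsMartingale μ (martProc r m b H)

/-- μ starts at x -/
def StartsAt (μ : Measure (PathSp S)) (x : S → ℝ) : Prop :=
  μ {ω : PathSp S | (ω 0 : S → ℝ) = x} = 1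

/-- the canonical projection of v_j on ℝ^A -/
def wproj (r : S → S → ℝ) (A : Finset S) (j : S) : ↥A → ℝ := fun i => vvec r j i.1

/-- the canonical basis vector e_k of ℝ^A (for k ∈ A) -/
def eA (A : Finset S) (k : S) : ↥A → ℝ := fun i => if i.1 = k then 1 else 0

lemma vvec_apply (r : S → S → ℝ) (j k : S) :
    vvec r j k = r j k - if k = j then ∑ l, r j l else 0 := by
  simp only [vvec, ebasis, Finset.sum_apply, Pi.smul_apply, Pi.sub_apply, smul_eq_mul, mul_sub,
    Finset.sum_sub_distrib, Pi.single_apply]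
  congr 1
  · simp
  · split_ifs <;> simp

lemma sum_vvec_mul (r : S → S → ℝ) (f : S → ℝ) (j : S) :
    ∑ k, vvec r j k * f k = gen r f j := by
  simp [vvec_apply, gen, sub_mul, mul_sub, Finset.sum_sub_distrib, Finset.sum_mul]

/-- Minimum principle: a function vanishing off a proper subset `A` and superharmonic on `A` is
nonnegative. A negative minimum would spread along all jumps of positive rate, hence by
irreducibility to the complement of `A`, where the function is zero. -/
lemma nonneg_of_gen_nonpos (r : S → S → ℝ) (hr : ∀ j k, 0 ≤ r j k) (hirr : IrreducibleRates r)
    (A : Finset S) (hA : A ≠ Finset.univ) (f : S → ℝ) (hf0 : ∀ j ∉ A, f j = 0)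
    (hf : ∀ j ∈ A, gen r f j ≤ 0) (j : S) : 0 ≤ f j := by
  obtain ⟨p, hp⟩ : ∃ p, p ∉ A := by
    by_contra! h
    exact hA (Finset.eq_univ_iff_forall.2 h)
  have : Nonempty S := ⟨j⟩
  obtain ⟨m, hm⟩ := Finite.exists_min f
  by_contra! hneg
  have hmneg : f m < 0 := (hm j).trans_lt hneg
  have step : ∀ a c, f a = f m → 0 < r a c → f c = f m := by
    intro a c ha hac
    have haA : a ∈ A := by
      by_contra h
      have := hf0 a h
      linarith
    have hnn : ∀ k ∈ Finset.univ, 0 ≤ r a k * (f k - f a) := fun k _ =>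
      mul_nonneg (hr a k) (by have := hm k; linarith)
    have hsum : gen r f a = 0 := le_antisymm (hf a haA) (Finset.sum_nonneg hnn)
    have hz := (Finset.sum_eq_zero_iff_of_nonneg hnn).1 hsum c (Finset.mem_univ c)
    rcases mul_eq_zero.1 hz with h | h <;> linarith
  have key : ∀ c, Relation.TransGen (fun a c => 0 < r a c) m c → f c = f m := by
    intro c hc
    induction hc with
    | single h => exact step _ _ rfl h
    | tail _ h ih => exact step _ _ ih h
  have hpm : m ≠ p := by
    rintro rfl
    have := hf0 m hp
    linarith
  have := key p (hirr m p hpm)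
  have := hf0 p hp
  linarith

/-- The matrix whose `j`-th row is the vector `w_j`. -/
def wMat (r : S → S → ℝ) (A : Finset S) : Matrix ↥A ↥A ℝ := fun j k => vvec r j.1 k.1

lemma nonneg_of_mulVec_nonpos (r : S → S → ℝ) (hr : ∀ j k, 0 ≤ r j k) (hirr : IrreducibleRates r)
    (A : Finset S) (hA : A ≠ Finset.univ) (h : ↥A → ℝ) (hh : ∀ j, (wMat r A).mulVec h j ≤ 0) :
    ∀ j, 0 ≤ h j := by
  let f : S → ℝ := fun s => if hs : s ∈ A then h ⟨s, hs⟩ else 0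
  have hf0 : ∀ j ∉ A, f j = 0 := fun j hj => by simp [f, hj]
  have hfA : ∀ j : ↥A, f j.1 = h j := fun j => by simp [f]
  have hgen : ∀ j ∈ A, gen r f j ≤ 0 := by
    intro j hj
    refine le_of_eq_of_le ?_ (hh ⟨j, hj⟩)
    rw [← sum_vvec_mul]
    simp only [Matrix.mulVec, dotProduct, wMat, ← hfA]
    rw [Finset.sum_coe_sort A (fun k => vvec r j k * f k)]
    exact (Finset.sum_subset (Finset.subset_univ A)
      (fun k _ hk => by rw [hf0 k hk, mul_zero])).symm
  intro j
  rw [← hfA]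
  exact nonneg_of_gen_nonpos r hr hirr A hA f hf0 hgen j.1

lemma exists_nonneg_le (r : S → S → ℝ) (hr : ∀ j k, 0 ≤ r j k) (hirr : IrreducibleRates r)
    (A : Finset S) (hA : A ≠ Finset.univ) (v : ↥A → ℝ) :
    ∃ x : ↥A → ℝ, (∀ k, 0 ≤ x k) ∧ ∀ k, (Matrix.vecMul x (wMat r A)) k ≤ v k := by
  have hmin := nonneg_of_mulVec_nonpos r hr hirr A hA
  set W := wMat r A
  have hinj : Function.Injective W.mulVec := by
    intro a b hab
    have hab' : W.mulVec (a - b) = 0 := by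
      rw [Matrix.mulVec_sub, sub_eq_zero]; exact hab
    have h1 := hmin (a - b) (fun j => by simp [hab'])
    have h2 := hmin (-(a - b)) (fun j => by rw [Matrix.mulVec_neg, hab']; simp)
    ext j
    have := h1 j
    have := h2 j
    simp only [Pi.neg_apply, Pi.sub_apply] at *
    linarith
  have hU : IsUnit W.det := (Matrix.isUnit_iff_isUnit_det W).1 (Matrix.mulVec_injective_iff_isUnit.1 hinj)
  let c : ↥A → ℝ := fun k => max (-v k) 0
  let x : ↥A → ℝ := Matrix.vecMul (-c) W⁻¹
  have hxW : Matrix.vecMul x W = -c := by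
    simp only [x, Matrix.vecMul_vecMul, Matrix.nonsing_inv_mul W hU, Matrix.vecMul_one]
  refine ⟨x, fun k => ?_, fun k => ?_⟩
  · -- `x k = c ⬝ g`, where `W g = -e_k` and hence `g ≥ 0`
    let g : ↥A → ℝ := W⁻¹.mulVec (-Pi.single k 1)
    have hWg : W.mulVec g = -Pi.single k 1 := by
      simp only [g, Matrix.mulVec_mulVec, Matrix.mul_nonsing_inv W hU, Matrix.one_mulVec]
    have hg : ∀ j, 0 ≤ g j := hmin g (fun j => by
      rw [hWg, Pi.neg_apply, Pi.single_apply]; split_ifs <;> norm_num)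
    have h1 : x ⬝ᵥ W.mulVec g = (-c) ⬝ᵥ g := by rw [Matrix.dotProduct_mulVec, hxW]
    rw [hWg] at h1
    simp only [dotProduct_neg, neg_dotProduct, dotProduct_single_one, neg_inj] at h1
    rw [h1]
    exact Finset.sum_nonneg fun j _ => mul_nonneg (le_max_right _ _) (hg j)
  · rw [hxW]
    have : -v k ≤ c k := le_max_left _ _
    simp only [Pi.neg_apply]
    linarith

/-- A matrix that is nonnegative off the diagonal admits, among the `x ≥ 0` with `x W ≤ v`, one
satisfying complementary slackness. -/
lemma exists_complementary {ι : Type*} [Fintype ι] [DecidableEq ι] (W : Matrix ι ι ℝ)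
    (hW : ∀ j k, j ≠ k → 0 ≤ W j k) (v x₀ : ι → ℝ) (hx₀ : ∀ k, 0 ≤ x₀ k)
    (hx₀v : ∀ k, Matrix.vecMul x₀ W k ≤ v k) :
    ∃ x : ι → ℝ, (∀ k, 0 ≤ x k) ∧ (∀ k, Matrix.vecMul x W k ≤ v k) ∧
      ∀ k, 0 < x k → Matrix.vecMul x W k = v k := by
  let F : Set (ι → ℝ) := {x | (∀ k, 0 ≤ x k) ∧ ∀ k, Matrix.vecMul x W k ≤ v k}
  have hcont : ∀ k, Continuous fun x : ι → ℝ => Matrix.vecMul x W k := fun k => by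
    simp only [Matrix.vecMul, dotProduct]; fun_prop
  have hFclosed : IsClosed F := by
    have : F = (⋂ k, {x | 0 ≤ x k}) ∩ ⋂ k, {x | Matrix.vecMul x W k ≤ v k} := by
      ext x; simp [F]
    rw [this]
    exact (isClosed_iInter fun k => isClosed_le continuous_const (continuous_apply k)).inter
      (isClosed_iInter fun k => isClosed_le (hcont k) continuous_const)
  let K : Set (ι → ℝ) := F ∩ {x | ∑ k, x k ≤ ∑ k, x₀ k}
  have hKcompact : IsCompact K := by
    refine (isCompact_Icc (a := (0 : ι → ℝ)) (b := fun _ => ∑ k, x₀ k)).of_isClosed_subset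
      (hFclosed.inter (isClosed_le (by fun_prop) continuous_const)) ?_
    rintro x ⟨⟨hx, -⟩, hs⟩
    exact ⟨hx, fun k => (Finset.single_le_sum (fun i _ => hx i) (Finset.mem_univ k)).trans hs⟩
  obtain ⟨x, ⟨⟨hx, hxv⟩, hxs⟩, hxmin⟩ := hKcompact.exists_isMinOn
    (f := fun x : ι → ℝ => ∑ k, x k) ⟨x₀, ⟨hx₀, hx₀v⟩, le_refl (∑ k, x₀ k)⟩ (by fun_prop)
  refine ⟨x, hx, hxv, fun k hk => le_antisymm (hxv k) ?_⟩
  by_contra! hlt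
  -- lowering `x k` by `ε` raises `(x W) k` by at most `ε * (|W k k| + 1)`, which the slack covers
  set s := v k - Matrix.vecMul x W k with hs
  have hspos : 0 < s := sub_pos.2 hlt
  have hq : 0 < |W k k| + 1 := by positivity
  set ε := min (x k) (s / (|W k k| + 1)) with hε
  have hεpos : 0 < ε := lt_min hk (div_pos hspos hq)
  have hεs : ε * (|W k k| + 1) ≤ s := (le_div_iff₀ hq).1 (min_le_right _ _)
  let z : ι → ℝ := x - Pi.single k ε
  have hzW : ∀ i, Matrix.vecMul z W i = Matrix.vecMul x W i - ε * W k i := fun i => by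
    simp [z, Matrix.sub_vecMul, Matrix.single_vecMul]
  have hzsum : ∑ i, z i = ∑ i, x i - ε := by
    simp [z, Finset.sum_sub_distrib]
  have hzF : z ∈ F := by
    refine ⟨fun i => ?_, fun i => ?_⟩
    · rcases eq_or_ne i k with rfl | hi
      · simpa [z] using show ε ≤ x i from min_le_left _ _
      · simpa [z, hi] using hx i
    · rw [hzW]
      rcases eq_or_ne i k with rfl | hi
      · nlinarith [neg_abs_le (W i i)]
      · have := mul_nonneg hεpos.le (hW k i hi.symm)
        have := hxv i
        linarith
  have hxs' : ∑ i, x i ≤ ∑ i, x₀ i := hxs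
  have hle : ∑ i, x i ≤ ∑ i, z i :=
    hxmin ⟨hzF, show ∑ i, z i ≤ ∑ i, x₀ i by linarith⟩
  linarith

/-- every vector of ℝ^A lies in one of the cones generated by
{w_j : j ∈ D} ∪ {e_k : k ∈ A \ D}, with nonnegative coefficients. -/
theorem statement19
    (S : Type) [Fintype S] [DecidableEq S] (hS : 2 ≤ Fintype.card S)
    (r : S → S → ℝ) (hr : ∀ j k, 0 ≤ r j k) (hrdiag : ∀ j, r j j = 0)
    (hirr : IrreducibleRates r)
    (A : Finset S) (hAne : A.Nonempty) (hAproper : A ≠ Finset.univ)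
    (v : ↥A → ℝ) :
    ∃ (D : Finset S) (α : S → ℝ), D ⊆ A ∧ (∀ j ∈ A, 0 ≤ α j) ∧
      v = (∑ j ∈ D, α j • wproj r A j) + (∑ k ∈ A \ D, α k • eA A k) := by
  obtain ⟨x₀, hx₀, hx₀v⟩ := exists_nonneg_le r hr hirr A hAproper v
  obtain ⟨x, hx, hxv, hxc⟩ := exists_complementary (wMat r A)
    (fun j k hjk => by
      have : k.1 ≠ j.1 := fun h => hjk (Subtype.ext h.symm)
      simpa [wMat, vvec_apply, this] using hr j.1 k.1) v x₀ hx₀ hx₀v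
  -- extensions by zero of `x` and of the slack `v - x W`
  let X : S → ℝ := fun s => if hs : s ∈ A then x ⟨s, hs⟩ else 0
  let Y : S → ℝ := fun s =>
    if hs : s ∈ A then v ⟨s, hs⟩ - Matrix.vecMul x (wMat r A) ⟨s, hs⟩ else 0
  have hXA : ∀ j : ↥A, X j.1 = x j := fun j => by simp [X]
  have hYA : ∀ j : ↥A, Y j.1 = v j - Matrix.vecMul x (wMat r A) j := fun j => by simp [Y]
  have hX0 : ∀ j ∈ A, 0 ≤ X j := fun j hj => by rw [hXA ⟨j, hj⟩]; exact hx _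
  have hY0 : ∀ j ∈ A, 0 ≤ Y j := fun j hj => by
    rw [hYA ⟨j, hj⟩]; exact sub_nonneg.2 (hxv _)
  have hXY : ∀ j ∈ A, 0 < X j → Y j = 0 := fun j hj h => by
    rw [hXA ⟨j, hj⟩] at h
    rw [hYA ⟨j, hj⟩, hxc _ h, sub_self]
  refine ⟨A.filter (fun j => 0 < X j), fun j => if 0 < X j then X j else Y j,
    Finset.filter_subset _ _, fun j hj => ?_, ?_⟩
  · dsimp only
    split_ifs
    exacts [hX0 j hj, hY0 j hj]
  · have h1 : ∑ j ∈ A.filter (fun j => 0 < X j),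
        (if 0 < X j then X j else Y j) • wproj r A j = ∑ j ∈ A, X j • wproj r A j := by
      rw [Finset.sum_filter]
      refine Finset.sum_congr rfl fun j hj => ?_
      split_ifs with h
      · rfl
      · rw [le_antisymm (not_lt.1 h) (hX0 j hj), zero_smul]
    have h2 : ∑ k ∈ A \ A.filter (fun j => 0 < X j),
        (if 0 < X k then X k else Y k) • eA A k = ∑ k ∈ A, Y k • eA A k := by
      rw [← Finset.filter_not, Finset.sum_filter]
      refine Finset.sum_congr rfl fun k hk => ?_
      split_ifs with h
      · rw [hXY k hk h, zero_smul]
      · rfl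
    rw [h1, h2]
    ext i
    have h3 : ∑ j ∈ A, X j * wproj r A j i = Matrix.vecMul x (wMat r A) i := by
      rw [← Finset.sum_coe_sort A (fun j => X j * wproj r A j i)]
      simp only [hXA]
      rfl
    have h4 : ∑ k ∈ A, Y k * eA A k i = Y i.1 := by
      simp [eA]
    simp only [Pi.add_apply, Finset.sum_apply, Pi.smul_apply, smul_eq_mul, h3, h4, hYA]
    ring
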